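/- arXiv:1907.06761 — 4 statements merged into one kernel-verified Lean document; each statement's English description precedes it below -/
import Mathlib

section
/- Every element of the fixed subring A^G is a ℂ-linear combination of 1 and orbit sums O(kn−i, i) with k ≥ 1 an integer and 0 ≤ i ≤ ⌊kn/2⌋; equivalently, A^G equals the ℂ-linear span of the set {1} ∪ {O(kn−i, i) : k ≥ 1, 0 ≤ i ≤ ⌊kn/2⌋}. -/
/-!
Setting: `lam n = exp(2πi/n)` is a primitive `n`-th root of unity in `ℂ`.
`SkewAlg` is the `(-1)`-skew polynomial ring `A = ℂ⟨u,v⟩/(uv+vu)`, with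
generators `uGen`, `vGen`.  The automorphism `g` (of order `2n`) is determined
by `g u = v`, `g v = lam n • u`, and generates the cyclic group `G`, so that
the fixed subring `A^G` is `{a | g a = a}`.  The orbit sum is
`orbitSum n a b = u^a v^b + (-1)^(a*b) * (lam n)^b • (u^b v^a)`.
-/

noncomputable section

/-- `lam n = exp(2πi/n)`, a primitive `n`-th root of unity. -/
def lam (n : ℕ) : ℂ := Complex.exp (2 * (Real.pi : ℂ) * Complex.I / (n : ℂ))

/-- The defining relation of the `(-1)`-skew polynomial ring: `uv + vu = 0`. -/
inductive SkewRel : FreeAlgebra ℂ (Fin 2) → FreeAlgebra ℂ (Fin 2) → Prop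
  | rel : SkewRel (FreeAlgebra.ι ℂ 0 * FreeAlgebra.ι ℂ 1 + FreeAlgebra.ι ℂ 1 * FreeAlgebra.ι ℂ 0) 0

/-- The skew polynomial ring `A = ℂ⟨u,v⟩/(uv+vu)`. -/
abbrev SkewAlg : Type := RingQuot SkewRel

/-- The generator `u` of `A`. -/
def uGen : SkewAlg := RingQuot.mkAlgHom ℂ SkewRel (FreeAlgebra.ι ℂ 0)

/-- The generator `v` of `A`. -/
def vGen : SkewAlg := RingQuot.mkAlgHom ℂ SkewRel (FreeAlgebra.ι ℂ 1)

/-- Orbit sum `O(a,b) = u^a v^b + (-1)^(ab) λ^b u^b v^a`. -/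
def orbitSum (n a b : ℕ) : SkewAlg :=
  uGen ^ a * vGen ^ b + ((-1 : ℂ) ^ (a * b) * lam n ^ b) • (uGen ^ b * vGen ^ a)

/-!
Since `g² (uᵃ vᵇ) = λᵃ⁺ᵇ uᵃ vᵇ`, summing the first `2n` iterates of `g` on a monomial
`uᵃ vᵇ` gives `(∑_{j<n} λ^{j(a+b)}) • O(a,b)`, which vanishes unless `n ∣ a + b`. This sum acts on
invariants as multiplication by `2n`, and monomials span `A`, so the orbit sums with `n ∣ a + b`
span the invariants. Finally `O(a,b)` is a scalar multiple of `O(b,a)`, so `b ≤ a` may be assumed.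
-/

open Finset

section Iterates

lemma fixedSubmodule_le_of_sum_pow_apply_mem {K M : Type*} [DivisionSemiring K] [AddCommMonoid M]
    [Module K M] {T : Module.End K M} {N : ℕ} (hN : (N : K) ≠ 0) {s : Set M}
    (hs : Submodule.span K s = ⊤) {W : Submodule K M} (hW : ∀ y ∈ s, ∑ j ∈ range N, (T ^ j) y ∈ W) :
    T.fixedSubmodule ≤ W := by
  intro x hx
  have hspan : Submodule.span K s ≤ W.comap (∑ j ∈ range N, T ^ j) :=
    Submodule.span_le.2 fun y hy => by simpa using hW y hy
  have hsum : ∑ j ∈ range N, (T ^ j) x ∈ W := by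
    simpa using hspan (hs ▸ Submodule.mem_top : x ∈ Submodule.span K s)
  have hpow (j : ℕ) : (T ^ j) x = x := by
    rw [Module.End.pow_apply]
    exact Function.IsFixedPt.iterate hx j
  rw [sum_congr rfl fun j _ => hpow j, sum_const, card_range, ← Nat.cast_smul_eq_nsmul K] at hsum
  exact (W.smul_mem_iff hN).1 hsum

variable {R M : Type*} [Semiring R] [AddCommMonoid M] [Module R M] {T : Module.End R M} {c : R}
  {x : M}

lemma pow_two_mul_apply_of_sq_apply (h : T (T x) = c • x) (n : ℕ) :
    (T ^ (2 * n)) x = c ^ n • x := by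
  induction n with
  | zero => simp
  | succ n ih =>
    rw [Nat.mul_succ, pow_add, Module.End.mul_apply, sq, Module.End.mul_apply, h, map_smul, ih,
      smul_smul, pow_succ']

lemma sum_range_two_mul_pow_apply_of_sq_apply (h : T (T x) = c • x) (n : ℕ) :
    ∑ j ∈ range (2 * n), (T ^ j) x = (∑ j ∈ range n, c ^ j) • (x + T x) := by
  induction n with
  | zero => simp
  | succ n ih =>
    rw [Nat.mul_succ, sum_range_succ, sum_range_succ, ih, sum_range_succ, add_smul, pow_succ',
      Module.End.mul_apply, pow_two_mul_apply_of_sq_apply h, map_smul, smul_add, smul_add,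
      add_assoc]

end Iterates

lemma geom_sum_pow_eq_zero_of_not_dvd {R : Type*} [CommRing R] [IsDomain R] {ζ : R} {n d : ℕ}
    (hζ : IsPrimitiveRoot ζ n) (hd : ¬ n ∣ d) : ∑ j ∈ range n, (ζ ^ d) ^ j = 0 := by
  have hne : 1 - ζ ^ d ≠ 0 := sub_ne_zero.2 fun h => hd ((hζ.pow_eq_one_iff_dvd d).1 h.symm)
  have hprod : (1 - ζ ^ d) * ∑ j ∈ range n, (ζ ^ d) ^ j = 0 := by
    rw [mul_neg_geom_sum, pow_right_comm, hζ.pow_eq_one, one_pow, sub_self]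
  exact (mul_eq_zero.1 hprod).resolve_left hne

section QCommuting

variable {R A : Type*} [CommSemiring R] [Semiring A] [Algebra R A] {q ζ : R} {u v : A}

lemma mul_pow_of_mul_eq_smul (hvu : v * u = q • (u * v)) (c : ℕ) :
    v * u ^ c = q ^ c • (u ^ c * v) := by
  have hsemi : SemiconjBy v u (q • u) := by rw [SemiconjBy, hvu, smul_mul_assoc]
  rw [(hsemi.pow_right c).eq, smul_pow, smul_mul_assoc]

lemma pow_mul_pow_of_mul_eq_smul (hvu : v * u = q • (u * v)) (b c : ℕ) :
    v ^ b * u ^ c = q ^ (b * c) • (u ^ c * v ^ b) := by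
  induction b with
  | zero => simp
  | succ b ih =>
    rw [pow_succ, mul_assoc, mul_pow_of_mul_eq_smul hvu, mul_smul_comm, ← mul_assoc, ih,
      smul_mul_assoc, smul_smul, mul_assoc, ← pow_add, add_comm c, Nat.succ_mul]

lemma monomial_mul_monomial (hvu : v * u = q • (u * v)) (a b c d : ℕ) :
    u ^ a * v ^ b * (u ^ c * v ^ d) = q ^ (b * c) • (u ^ (a + c) * v ^ (b + d)) := by
  calc u ^ a * v ^ b * (u ^ c * v ^ d) = u ^ a * (v ^ b * u ^ c) * v ^ d := by
        simp only [mul_assoc]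
    _ = q ^ (b * c) • (u ^ (a + c) * v ^ (b + d)) := by
        rw [pow_mul_pow_of_mul_eq_smul hvu, mul_smul_comm, smul_mul_assoc, pow_add, pow_add]
        simp only [mul_assoc]

lemma adjoin_le_span_monomials (hvu : v * u = q • (u * v)) :
    Subalgebra.toSubmodule (Algebra.adjoin R {u, v}) ≤
      Submodule.span R (Set.range fun p : ℕ × ℕ => u ^ p.1 * v ^ p.2) := by
  set S := Submodule.span R (Set.range fun p : ℕ × ℕ => u ^ p.1 * v ^ p.2)
  have hmem (a b : ℕ) : u ^ a * v ^ b ∈ S := Submodule.subset_span ⟨(a, b), rfl⟩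
  have hmul : S * S ≤ S := by
    rw [Submodule.span_mul_span, Submodule.span_le]
    rintro _ ⟨_, ⟨⟨a, b⟩, rfl⟩, _, ⟨⟨c, d⟩, rfl⟩, rfl⟩
    simpa only [monomial_mul_monomial hvu, SetLike.mem_coe] using S.smul_mem _ (hmem _ _)
  have hadjoin : Algebra.adjoin R {u, v} ≤
      S.toSubalgebra (by simpa using hmem 0 0)
        fun x y hx hy => hmul (Submodule.mul_mem_mul hx hy) :=
    Algebra.adjoin_le <| Set.pair_subset (by simpa using hmem 1 0) (by simpa using hmem 0 1)
  exact hadjoin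

lemma orbit_coeff_mul_orbit_coeff (hq : q ^ 2 = 1) (a b : ℕ) :
    q ^ (a * b) * ζ ^ b * (q ^ (b * a) * ζ ^ a) = ζ ^ (a + b) := by
  calc q ^ (a * b) * ζ ^ b * (q ^ (b * a) * ζ ^ a) = (q ^ 2) ^ (a * b) * ζ ^ (a + b) := by ring
    _ = ζ ^ (a + b) := by rw [hq, one_pow, one_mul]

/-- The orbit sum `O(a,b) = uᵃ vᵇ + q^(ab) ζᵇ uᵇ vᵃ` of a monomial in two `q`-commuting elements
under `u ↦ v ↦ ζ u`; `orbitSum` is the case `q = -1`, `ζ = lam n`. -/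
def qOrbitSum (q ζ : R) (u v : A) (a b : ℕ) : A :=
  u ^ a * v ^ b + (q ^ (a * b) * ζ ^ b) • (u ^ b * v ^ a)

/-- The span of `1` and the orbit sums `O(kn - i, i)` with `k ≥ 1` and `i ≤ ⌊kn/2⌋`, where the
last bound makes the subtraction `kn - i` exact. -/
def orbitSumSpan (n : ℕ) (q ζ : R) (u v : A) : Submodule R A :=
  Submodule.span R ({1} ∪
    {x : A | ∃ k i : ℕ, 1 ≤ k ∧ i ≤ k * n / 2 ∧ x = qOrbitSum q ζ u v (k * n - i) i})

lemma qOrbitSum_swap (hq : q ^ 2 = 1) {a b : ℕ} (hab : ζ ^ (a + b) = 1) :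
    qOrbitSum q ζ u v a b = (q ^ (a * b) * ζ ^ b) • qOrbitSum q ζ u v b a := by
  rw [qOrbitSum, qOrbitSum, smul_add, smul_smul, orbit_coeff_mul_orbit_coeff hq, hab,
    one_smul, add_comm]

lemma qOrbitSum_mem_orbitSumSpan {n : ℕ} (hq : q ^ 2 = 1) (hζ : ζ ^ n = 1) {a b : ℕ}
    (hab : n ∣ a + b) : qOrbitSum q ζ u v a b ∈ orbitSumSpan n q ζ u v := by
  obtain ⟨k, hk⟩ := hab
  have hpow : ζ ^ (a + b) = 1 := by rw [hk, pow_mul, hζ, one_pow]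
  wlog hba : b ≤ a generalizing a b
  · rw [qOrbitSum_swap hq hpow]
    exact Submodule.smul_mem _ _
      (this (by rwa [add_comm]) (by rwa [add_comm]) (Nat.le_of_not_le hba))
  rw [mul_comm] at hk
  rcases Nat.eq_zero_or_pos k with rfl | hk_pos
  · obtain ⟨rfl, rfl⟩ : a = 0 ∧ b = 0 := by omega
    have hone : (1 : A) ∈ orbitSumSpan n q ζ u v := Submodule.subset_span (Or.inl rfl)
    simpa [qOrbitSum] using add_mem hone hone
  · refine Submodule.subset_span (Or.inr ⟨k, b, hk_pos, by omega, ?_⟩)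
    rw [← hk, Nat.add_sub_cancel]

section Automorphism

variable {g : A →ₐ[R] A}

lemma map_monomial (hvu : v * u = q • (u * v)) (hgu : g u = v) (hgv : g v = ζ • u) (a b : ℕ) :
    g (u ^ a * v ^ b) = (q ^ (a * b) * ζ ^ b) • (u ^ b * v ^ a) := by
  rw [map_mul, map_pow, map_pow, hgu, hgv, smul_pow, mul_smul_comm, pow_mul_pow_of_mul_eq_smul hvu,
    smul_smul, mul_comm]

lemma map_map_monomial (hvu : v * u = q • (u * v)) (hq : q ^ 2 = 1) (hgu : g u = v)
    (hgv : g v = ζ • u) (a b : ℕ) :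
    g (g (u ^ a * v ^ b)) = ζ ^ (a + b) • (u ^ a * v ^ b) := by
  rw [map_monomial hvu hgu hgv, map_smul, map_monomial hvu hgu hgv, smul_smul,
    orbit_coeff_mul_orbit_coeff hq]

lemma qOrbitSum_eq_add_map (hvu : v * u = q • (u * v)) (hgu : g u = v) (hgv : g v = ζ • u)
    (a b : ℕ) : qOrbitSum q ζ u v a b = u ^ a * v ^ b + g (u ^ a * v ^ b) := by
  rw [map_monomial hvu hgu hgv, qOrbitSum]

lemma map_qOrbitSum (hvu : v * u = q • (u * v)) (hq : q ^ 2 = 1) (hgu : g u = v)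
    (hgv : g v = ζ • u) {a b : ℕ} (hab : ζ ^ (a + b) = 1) :
    g (qOrbitSum q ζ u v a b) = qOrbitSum q ζ u v a b := by
  rw [qOrbitSum_eq_add_map hvu hgu hgv, map_add, map_map_monomial hvu hq hgu hgv, hab, one_smul,
    add_comm]

lemma orbitSumSpan_le_fixedSubmodule {n : ℕ} (hvu : v * u = q • (u * v)) (hq : q ^ 2 = 1)
    (hζ : ζ ^ n = 1) (hgu : g u = v) (hgv : g v = ζ • u) :
    orbitSumSpan n q ζ u v ≤ g.toLinearMap.fixedSubmodule := by
  refine Submodule.span_le.2 ?_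
  rintro _ (rfl | ⟨k, i, -, hi, rfl⟩)
  · exact map_one g
  · have hdeg : k * n - i + i = n * k := by rw [mul_comm n]; omega
    exact map_qOrbitSum hvu hq hgu hgv (by rw [hdeg, pow_mul, hζ, one_pow])

end Automorphism

end QCommuting

section PrimitiveRoot

variable {K A : Type*} [Field K] [Semiring A] [Algebra K A] {q ζ : K} {u v : A}
  {g : A →ₐ[K] A} {n : ℕ}

lemma sum_pow_apply_monomial_mem_orbitSumSpan (hvu : v * u = q • (u * v)) (hq : q ^ 2 = 1)
    (hζ : IsPrimitiveRoot ζ n) (hgu : g u = v) (hgv : g v = ζ • u) (a b : ℕ) :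
    ∑ j ∈ range (2 * n), (g.toLinearMap ^ j) (u ^ a * v ^ b) ∈ orbitSumSpan n q ζ u v := by
  have hsum : ∑ j ∈ range (2 * n), (g.toLinearMap ^ j) (u ^ a * v ^ b) =
      (∑ j ∈ range n, (ζ ^ (a + b)) ^ j) • qOrbitSum q ζ u v a b := by
    rw [qOrbitSum_eq_add_map hvu hgu hgv]
    exact sum_range_two_mul_pow_apply_of_sq_apply (map_map_monomial hvu hq hgu hgv a b) n
  rw [hsum]
  by_cases hab : n ∣ a + b
  · exact Submodule.smul_mem _ _ (qOrbitSum_mem_orbitSumSpan hq hζ.pow_eq_one hab)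
  · rw [geom_sum_pow_eq_zero_of_not_dvd hζ hab, zero_smul]
    exact Submodule.zero_mem _

theorem fixed_eq_span_general [NeZero n] (h2 : (2 : K) ≠ 0) (hA : Algebra.adjoin K {u, v} = ⊤)
    (hvu : v * u = q • (u * v)) (hq : q ^ 2 = 1) (hζ : IsPrimitiveRoot ζ n) (hgu : g u = v)
    (hgv : g v = ζ • u) : g.toLinearMap.fixedSubmodule = orbitSumSpan n q ζ u v := by
  refine le_antisymm ?_ (orbitSumSpan_le_fixedSubmodule hvu hq hζ.pow_eq_one hgu hgv)
  have hN : ((2 * n : ℕ) : K) ≠ 0 := by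
    have := hζ.neZero'
    rw [Nat.cast_mul, Nat.cast_ofNat]
    exact mul_ne_zero h2 (NeZero.ne _)
  have hspan : Submodule.span K (Set.range fun p : ℕ × ℕ => u ^ p.1 * v ^ p.2) = ⊤ :=
    top_le_iff.1 <| by simpa only [hA, Algebra.top_toSubmodule] using adjoin_le_span_monomials hvu
  refine fixedSubmodule_le_of_sum_pow_apply_mem hN hspan ?_
  rintro _ ⟨⟨a, b⟩, rfl⟩
  exact sum_pow_apply_monomial_mem_orbitSumSpan hvu hq hζ hgu hgv a b

end PrimitiveRoot

lemma vGen_mul_uGen : vGen * uGen = (-1 : ℂ) • (uGen * vGen) := by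
  have hrel : uGen * vGen + vGen * uGen = 0 := by
    simpa only [uGen, vGen, map_add, map_mul, map_zero] using RingQuot.mkAlgHom_rel ℂ SkewRel.rel
  exact (eq_neg_of_add_eq_zero_right hrel).trans (neg_one_smul ℂ _).symm

lemma adjoin_uGen_vGen : Algebra.adjoin ℂ {uGen, vGen} = ⊤ := by
  have himage : ({uGen, vGen} : Set SkewAlg) =
      RingQuot.mkAlgHom ℂ SkewRel '' Set.range (FreeAlgebra.ι ℂ) := by
    rw [← Set.range_comp]
    ext x
    simp [uGen, vGen, eq_comm]
  rw [himage, ← AlgHom.map_adjoin, FreeAlgebra.adjoin_range_ι, Algebra.map_top,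
    AlgHom.range_eq_top]
  exact RingQuot.mkAlgHom_surjective ℂ SkewRel

/-- Every element of the fixed subring `A^G` is a `ℂ`-linear combination of `1`
and orbit sums `O(kn-i, i)` with `k ≥ 1` and `0 ≤ i ≤ ⌊kn/2⌋`. -/
theorem fixed_eq_span (n : ℕ) (hn : 0 < n) (g : SkewAlg ≃ₐ[ℂ] SkewAlg)
    (hgu : g uGen = vGen) (hgv : g vGen = lam n • uGen) :
    {a : SkewAlg | g a = a} =
      ↑(Submodule.span ℂ ({1} ∪
        {x : SkewAlg | ∃ k i : ℕ, 1 ≤ k ∧ i ≤ k * n / 2 ∧ x = orbitSum n (k * n - i) i})) := by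
  have : NeZero n := ⟨hn.ne'⟩
  exact congrArg SetLike.coe <| fixed_eq_span_general (g := (g : SkewAlg →ₐ[ℂ] SkewAlg))
    two_ne_zero adjoin_uGen_vGen vGen_mul_uGen (by norm_num)
    (Complex.isPrimitiveRoot_exp n hn.ne') hgu hgv
end
end

section
/- Suppose n is even. Then for all integers i, j with 0 ≤ j ≤ i < n/2, the following identity holds in A: O(n−i, i)·O(n−j, j) = (−1)^{ij} O(2n−i−j, i+j) + (−1)^{i(j+1)} λ^i O(n+i−j, n−i+j). Consequently, any two orbit sums of degree n commute: O(n−i, i)·O(n−j, j) = O(n−j, j)·O(n−i, i) for all 0 ≤ i, j ≤ n/2. -/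
/-!
Setting: `lam n = exp(2πi/n)` is a primitive `n`-th root of unity in `ℂ`.
`SkewAlg` is the `(-1)`-skew polynomial ring `A = ℂ⟨u,v⟩/(uv+vu)`, with
generators `uGen`, `vGen`.  The automorphism `g` (of order `2n`) is determined
by `g u = v`, `g v = lam n • u`, and generates the cyclic group `G`, so that
the fixed subring `A^G` is `{a | g a = a}`.  The orbit sum is
`orbitSum n a b = u^a v^b + (-1)^(a*b) * (lam n)^b • (u^b v^a)`.
-/

noncomputable section

/-!
Over any commutative ring, let `v u = -u v` and let `c` be the twist in the orbit sums `O(a, b)`.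
Expanding a product `O(a, b) O(a', b')` gives four monomials. When `c ^ (a + b) = 1` they pair off
into multiples of the two orbit sums `O(a + a', b + b')` and `O(b + a', a + b')`, because every sign
that has to cancel occurs squared. Exchanging the factors keeps the first orbit sum and reverses the
second into `O(a + b', b + a')`, which is a scalar multiple of it; the coefficients in the two
orders agree when both degrees are even.
-/

section QCommuting

variable {R A : Type*} [CommSemiring R] [Semiring A] [Algebra R A] {q : R} {u v : A}

theorem semiconjBy_pow_pow_smul (h : SemiconjBy v u (q • u)) (m k : ℕ) :
    SemiconjBy (v ^ m) (u ^ k) (q ^ (m * k) • u ^ k) := by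
  have hm : SemiconjBy (v ^ m) u (q ^ m • u) := by
    induction m with
    | zero => simp
    | succ m ih =>
      rw [pow_succ, pow_succ', mul_smul]
      exact (ih.smul_right q).mul_left h
  simpa [smul_pow, pow_mul] using hm.pow_right k

theorem monomial_mul_monomial_of_semiconjBy (h : SemiconjBy v u (q • u)) (a b a' b' : ℕ) :
    u ^ a * v ^ b * (u ^ a' * v ^ b') = q ^ (b * a') • (u ^ (a + a') * v ^ (b + b')) := by
  calc u ^ a * v ^ b * (u ^ a' * v ^ b')
      = u ^ a * (v ^ b * u ^ a') * v ^ b' := by simp only [mul_assoc]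
    _ = u ^ a * (q ^ (b * a') • u ^ a' * v ^ b) * v ^ b' := by
      rw [(semiconjBy_pow_pow_smul h b a').eq]
    _ = q ^ (b * a') • (u ^ (a + a') * v ^ (b + b')) := by
      simp only [smul_mul_assoc, mul_smul_comm, pow_add, mul_assoc]

end QCommuting

section SkewOrbitSum

variable {R A : Type*} [CommRing R] [Ring A] [Algebra R A]

/-- The orbit sum `O(a, b)` of two elements `u`, `v` of an algebra, with a scalar `c` in the role of
the root of unity `λ`. When `v u = -u v`, it is the sum of `u ^ a v ^ b` and its image under
`u ↦ v`, `v ↦ c u`; the image is written with the powers of `u` on the left. -/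
def skewOrbitSum (c : R) (u v : A) (a b : ℕ) : A :=
  u ^ a * v ^ b + ((-1) ^ (a * b) * c ^ b) • (u ^ b * v ^ a)

variable {c : R} {u v : A}

theorem skewOrbitSum_eq_smul_swap {a b : ℕ} (hc : c ^ (a + b) = 1) :
    skewOrbitSum c u v a b = ((-1) ^ (a * b) * c ^ b) • skewOrbitSum c u v b a := by
  have hcoeff : (-1) ^ (a * b) * c ^ b * ((-1) ^ (b * a) * c ^ a) = 1 := by
    calc (-1) ^ (a * b) * c ^ b * ((-1) ^ (b * a) * c ^ a)
        = (-1) ^ (2 * (a * b)) * c ^ (a + b) := by ring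
      _ = 1 := by simp [hc]
  rw [skewOrbitSum, skewOrbitSum, smul_add, smul_smul, hcoeff, one_smul, add_comm]

theorem skewOrbitSum_mul_skewOrbitSum (h : SemiconjBy v u (-u)) {a b : ℕ} (hc : c ^ (a + b) = 1)
    (a' b' : ℕ) :
    skewOrbitSum c u v a b * skewOrbitSum c u v a' b' =
      (-1 : R) ^ (b * a') • skewOrbitSum c u v (a + a') (b + b') +
        ((-1) ^ (a * (b + a')) * c ^ b) • skewOrbitSum c u v (b + a') (a + b') := by
  have hq : SemiconjBy v u ((-1 : R) • u) := by rwa [neg_one_smul]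
  have hsq (k : ℕ) : (-1 : R) ^ (2 * k) = 1 := by simp
  have houter : (-1) ^ (a * b + a' * b' + a * b') * c ^ (b + b') =
      (-1) ^ (b * a') * ((-1) ^ ((a + a') * (b + b')) * c ^ (b + b')) := by
    linear_combination -(-1) ^ (a * b + a' * b' + a * b') * c ^ (b + b') * hsq (b * a')
  have hinner : (-1) ^ (a' * b' + b * b') * c ^ b' =
      (-1) ^ (a * (b + a')) * c ^ b * ((-1) ^ ((b + a') * (a + b')) * c ^ (a + b')) := by
    linear_combination
      -(-1) ^ (a' * b' + b * b') * c ^ b' * (c ^ (a + b) * hsq (a * (b + a')) + hc)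
  calc skewOrbitSum c u v a b * skewOrbitSum c u v a' b'
      = (-1 : R) ^ (b * a') • (u ^ (a + a') * v ^ (b + b')) +
          ((-1) ^ (a * (b + a')) * c ^ b) • (u ^ (b + a') * v ^ (a + b')) +
          ((-1) ^ (a' * b' + b * b') * c ^ b') • (u ^ (a + b') * v ^ (b + a')) +
          ((-1) ^ (a * b + a' * b' + a * b') * c ^ (b + b')) • (u ^ (b + b') * v ^ (a + a')) := by
        simp only [skewOrbitSum, add_mul, mul_add, smul_mul_assoc, mul_smul_comm, smul_smul,
          monomial_mul_monomial_of_semiconjBy hq]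
        module
    _ = _ := by
        rw [houter, hinner, skewOrbitSum, skewOrbitSum]
        module

theorem commute_skewOrbitSum (h : SemiconjBy v u (-u)) {a b a' b' : ℕ}
    (hab : Even (a + b)) (hab' : Even (a' + b')) (hc : c ^ (a + b) = 1) (hc' : c ^ (a' + b') = 1) :
    Commute (skewOrbitSum c u v a b) (skewOrbitSum c u v a' b') := by
  have hdeg : c ^ (b + a' + (a + b')) = 1 := by
    rw [show b + a' + (a + b') = a + b + (a' + b') by ring, pow_add, hc, hc', one_mul]
  have hsign : (-1 : R) ^ (b * a') = (-1) ^ (b' * a) := neg_one_pow_congr (by grind)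
  have hsign' : (-1 : R) ^ (a * (b + a') + (b + a') * (a + b')) = (-1) ^ (a' * (b' + a)) :=
    neg_one_pow_congr (by grind)
  have hcoeff : (-1) ^ (a * (b + a')) * c ^ b * ((-1) ^ ((b + a') * (a + b')) * c ^ (a + b')) =
      (-1) ^ (a' * (b' + a)) * c ^ b' := by
    linear_combination c ^ (a + b + b') * hsign' + (-1) ^ (a' * (b' + a)) * c ^ b' * hc
  rw [Commute, SemiconjBy, skewOrbitSum_mul_skewOrbitSum h hc, skewOrbitSum_mul_skewOrbitSum h hc',
    skewOrbitSum_eq_smul_swap hdeg, smul_smul, hcoeff, hsign, add_comm a', add_comm b' b,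
    add_comm a b', add_comm b a']

theorem orbitSum_deg_n_mul_general {n : ℕ} (hn : Even n) (hc : c ^ n = 1)
    (h : SemiconjBy v u (-u)) {i j : ℕ} (hi : i ≤ n) (hj : j ≤ n) :
    skewOrbitSum c u v (n - i) i * skewOrbitSum c u v (n - j) j =
        (-1 : R) ^ (i * j) • skewOrbitSum c u v (2 * n - i - j) (i + j) +
          ((-1) ^ (i * (j + 1)) * c ^ i) • skewOrbitSum c u v (n + i - j) (n - i + j) ∧
      Commute (skewOrbitSum c u v (n - i) i) (skewOrbitSum c u v (n - j) j) := by
  have hi' : n - i + i = n := Nat.sub_add_cancel hi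
  have hj' : n - j + j = n := Nat.sub_add_cancel hj
  have hsign : (-1 : R) ^ (i * (n - j)) = (-1) ^ (i * j) := neg_one_pow_congr (by grind)
  have hsign' : (-1 : R) ^ ((n - i) * (i + (n - j))) = (-1) ^ (i * (j + 1)) :=
    neg_one_pow_congr (by grind)
  constructor
  · rw [skewOrbitSum_mul_skewOrbitSum h (by rwa [hi']), hsign, hsign',
      show n - i + (n - j) = 2 * n - i - j by omega, show i + (n - j) = n + i - j by omega]
  · apply commute_skewOrbitSum h <;> simpa only [hi', hj']

end SkewOrbitSum

theorem lam_pow_self (n : ℕ) : lam n ^ n = 1 := by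
  rcases eq_or_ne n 0 with rfl | hn
  · exact pow_zero _
  · exact (Complex.isPrimitiveRoot_exp n hn).pow_eq_one

theorem semiconjBy_vGen_uGen : SemiconjBy vGen uGen (-uGen) := by
  have hrel : uGen * vGen + vGen * uGen = 0 := by
    simpa [uGen, vGen] using RingQuot.mkAlgHom_rel ℂ SkewRel.rel
  exact (eq_neg_of_add_eq_zero_right hrel).trans (neg_mul uGen vGen).symm

theorem orbitSum_eq_skewOrbitSum (n : ℕ) : orbitSum n = skewOrbitSum (lam n) uGen vGen := rfl

/-- For `n` even and `0 ≤ j ≤ i < n/2`,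
`O(n-i,i) O(n-j,j) = (-1)^(ij) O(2n-i-j, i+j) + (-1)^(i(j+1)) λ^i O(n+i-j, n-i+j)`;
consequently any two orbit sums of degree `n` commute. -/
theorem orbitSum_deg_n_mul (n : ℕ) (hn : 0 < n) (hne : Even n) :
    (∀ i j : ℕ, j ≤ i → i < n / 2 →
      orbitSum n (n - i) i * orbitSum n (n - j) j =
        ((-1 : ℂ) ^ (i * j)) • orbitSum n (2 * n - i - j) (i + j) +
          ((-1 : ℂ) ^ (i * (j + 1)) * lam n ^ i) • orbitSum n (n + i - j) (n - i + j)) ∧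
    (∀ i j : ℕ, i ≤ n / 2 → j ≤ n / 2 →
      orbitSum n (n - i) i * orbitSum n (n - j) j =
        orbitSum n (n - j) j * orbitSum n (n - i) i) := by
  simp only [orbitSum_eq_skewOrbitSum]
  have general {i j : ℕ} (hi : i ≤ n) (hj : j ≤ n) :=
    orbitSum_deg_n_mul_general hne (lam_pow_self n) semiconjBy_vGen_uGen hi hj
  exact ⟨fun i j hji hi ↦ (general (by omega) (by omega)).1,
    fun i j hi hj ↦ (general (by omega) (by omega)).2⟩
end
end

section
/- Suppose n ≡ 0 (mod 4). For each nonnegative integer p set x_p := (−1)^{⌊(p+1)/2⌋} λ^{⌊(p+1)/2⌋} ∈ ℂ. Then for all integers i, j with 0 ≤ j ≤ i < n/2, one has (−1)^{ij} x_{i+j} + (−1)^{i(j+1)} λ^i x_{n−i+j} = 0. (This exhibits a nontrivial solution of the homogeneous linear system arising from products of degree-n orbit sums in the skew polynomial ring.) -/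
noncomputable section

/-- The candidate solution `x_p = (-1)^⌊(p+1)/2⌋ λ^⌊(p+1)/2⌋`. -/
def xSol (n p : ℕ) : ℂ := (-1 : ℂ) ^ ((p + 1) / 2) * lam n ^ ((p + 1) / 2)

/-!
All signs are absorbed by `w = -λ`: `x_p = w ^ ⌊(p+1)/2⌋` and
`(-1)^(i(j+1)) λ^i = (-1)^(ij) w^i`. Multiplication by `w^i` turns `x_(n-i+j)` into
`w^(n/2) x_(i+j)`, and `w^(n/2) = λ^(n/2) = -1` because `n/2` is even.
-/

/-- The candidate solution `x_p` with an arbitrary element `z` in place of `λ`; the factors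
`(-1)^k` and `z^k` of `x_p` are merged into `(-z)^k`. -/
def negHalfPow {R : Type*} [Monoid R] [HasDistribNeg R] (z : R) (p : ℕ) : R :=
  (-z) ^ ((p + 1) / 2)

theorem neg_pow_mul_negHalfPow {R : Type*} [Monoid R] [HasDistribNeg R] (z : R) {n i : ℕ}
    (hn : Even n) (hi : i ≤ n) (j : ℕ) :
    (-z) ^ i * negHalfPow z (n - i + j) = (-z) ^ (n / 2) * negHalfPow z (i + j) := by
  have exponents : i + (n - i + j + 1) / 2 = n / 2 + (i + j + 1) / 2 := by grind
  rw [negHalfPow, negHalfPow, ← pow_add, ← pow_add, exponents]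

theorem xSol_solves_system_general {R : Type*} [Ring R] {z : R} {n : ℕ} (h4 : 4 ∣ n)
    (hz : z ^ (n / 2) = -1) {i : ℕ} (hi : i ≤ n) (j : ℕ) :
    (-1) ^ (i * j) * negHalfPow z (i + j) +
      (-1) ^ (i * (j + 1)) * z ^ i * negHalfPow z (n - i + j) = 0 := by
  have even_n : Even n := by grind
  have even_half : Even (n / 2) := by grind
  have sign : (-1) ^ (i * (j + 1)) * z ^ i = (-1) ^ (i * j) * (-z) ^ i := by
    rw [mul_add_one, pow_add, mul_assoc, ← neg_pow]
  rw [sign, mul_assoc, neg_pow_mul_negHalfPow z even_n hi j, even_half.neg_pow, hz, neg_one_mul,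
    mul_neg, add_neg_cancel]

theorem isPrimitiveRoot_lam {n : ℕ} (hn : n ≠ 0) : IsPrimitiveRoot (lam n) n :=
  Complex.isPrimitiveRoot_exp n hn

theorem lam_pow_half {n : ℕ} (hn : n ≠ 0) (hn2 : Even n) : lam n ^ (n / 2) = -1 :=
  ((isPrimitiveRoot_lam hn).pow (Nat.pos_of_ne_zero hn)
    (Nat.div_two_mul_two_of_even hn2).symm).eq_neg_one_of_two_right

theorem xSol_eq_negHalfPow (n p : ℕ) : xSol n p = negHalfPow (lam n) p :=
  (neg_pow _ _).symm

/-- If `n ≡ 0 (mod 4)` (and `n > 0`), then `x_p = (-1)^⌊(p+1)/2⌋ λ^⌊(p+1)/2⌋`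
solves the homogeneous system
`0 = (-1)^(ij) x_(i+j) + (-1)^(i(j+1)) λ^i x_(n-i+j)` for `0 ≤ j ≤ i < n/2`. -/
theorem xSol_solves_system (n : ℕ) (hn : 0 < n) (h4 : n % 4 = 0)
    (i j : ℕ) (hji : j ≤ i) (hi : i < n / 2) :
    (-1 : ℂ) ^ (i * j) * xSol n (i + j) +
      (-1 : ℂ) ^ (i * (j + 1)) * lam n ^ i * xSol n (n - i + j) = 0 := by
  rw [xSol_eq_negHalfPow, xSol_eq_negHalfPow]
  exact xSol_solves_system_general (by lia) (lam_pow_half hn.ne' (by grind)) (by lia) j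
end
end

section
/- Suppose n is odd. Then the fixed subring A^G is generated as a ℂ-algebra by the orbit sums of degrees n, 2n and 3n; that is, A^G equals the ℂ-subalgebra of A generated by the set {O(n−i, i) : 0 ≤ i ≤ (n−1)/2} ∪ {O(2n−i, i) : 0 ≤ i ≤ n} ∪ {O(3n−i, i) : 0 ≤ i ≤ (3n−1)/2}. (This is the upper bound β(g) ≤ 3n.) -/
/-!
Setting: `lam n = exp(2πi/n)` is a primitive `n`-th root of unity in `ℂ`.
`SkewAlg` is the `(-1)`-skew polynomial ring `A = ℂ⟨u,v⟩/(uv+vu)`, with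
generators `uGen`, `vGen`.  The automorphism `g` (of order `2n`) is determined
by `g u = v`, `g v = lam n • u`, and generates the cyclic group `G`, so that
the fixed subring `A^G` is `{a | g a = a}`.  The orbit sum is
`orbitSum n a b = u^a v^b + (-1)^(a*b) * (lam n)^b • (u^b v^a)`.
-/

noncomputable section

/-!
**Idea.** Monomials are eigenvectors of `g²`, with eigenvalue `λ^(a+b)` on `u^a v^b`, so a fixed
element is a combination of monomials of degree divisible by `n`; averaging over `1` and `g` turns
these into orbit sums, which therefore span `A^G`.  An orbit sum is the transfer `m + g m` of a
monomial `m`, so the projection formula `(m + g m) y = m y + g (m y)` for fixed `y` expands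
products of orbit sums.  For even `m` divisible by `n` it gives `O(a,b) O(m,m) = 2 O(a+m,b+m)`,
while multiplication by `O(n,0)` trades `O(a+n,b)` for `O(a,b+n)`.  With `m = 2n` these two rules
reach every degree from `5n` on.  In degree `4n` take `m = n` when `n` is even; when `n` is odd,
combining left and right multiplication by `O(n,0)` isolates `O(a+n,b)`.
-/

section QCommuting

variable {R A : Type*} [CommSemiring R] [Semiring A] [Algebra R A] {q : R} {x y : A}

theorem pow_mul_pow_of_qCommute (h : y * x = q • (x * y)) (b c : ℕ) :
    y ^ b * x ^ c = q ^ (b * c) • (x ^ c * y ^ b) := by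
  have mul_pow_right (c : ℕ) : y * x ^ c = q ^ c • (x ^ c * y) := by
    induction c with
    | zero => simp
    | succ c ih =>
      rw [pow_succ, ← mul_assoc, ih, smul_mul_assoc, mul_assoc, h, mul_smul_comm, smul_smul,
        ← pow_succ, ← mul_assoc]
  induction b with
  | zero => simp
  | succ b ih =>
    rw [pow_succ, mul_assoc, mul_pow_right, mul_smul_comm, ← mul_assoc, ih, smul_mul_assoc,
      smul_smul, mul_assoc, ← pow_add, add_one_mul, add_comm]

theorem monomial_mul_monomial_of_qCommute (h : y * x = q • (x * y)) (a b c d : ℕ) :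
    x ^ a * y ^ b * (x ^ c * y ^ d) = q ^ (b * c) • (x ^ (a + c) * y ^ (b + d)) := by
  calc x ^ a * y ^ b * (x ^ c * y ^ d) = x ^ a * (y ^ b * x ^ c) * y ^ d := by
        simp only [mul_assoc]
    _ = q ^ (b * c) • (x ^ a * (x ^ c * y ^ b) * y ^ d) := by
        rw [pow_mul_pow_of_qCommute h, mul_smul_comm, smul_mul_assoc]
    _ = q ^ (b * c) • (x ^ (a + c) * y ^ (b + d)) := by
        simp only [pow_add, mul_assoc]

theorem adjoin_pair_le_span_monomials_of_qCommute (h : y * x = q • (x * y)) :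
    Subalgebra.toSubmodule (Algebra.adjoin R {x, y}) ≤
      Submodule.span R (Set.range fun p : ℕ × ℕ => x ^ p.1 * y ^ p.2) := by
  set S := Submodule.span R (Set.range fun p : ℕ × ℕ => x ^ p.1 * y ^ p.2) with hS
  have monomial_mem (a b : ℕ) : x ^ a * y ^ b ∈ S := Submodule.subset_span ⟨(a, b), rfl⟩
  have mul_le : S * S ≤ S := by
    rw [hS, Submodule.span_mul_span, Submodule.span_le]
    rintro _ ⟨_, ⟨p, rfl⟩, _, ⟨r, rfl⟩, rfl⟩
    simp only [monomial_mul_monomial_of_qCommute h, ← hS, SetLike.mem_coe]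
    exact S.smul_mem _ (monomial_mem _ _)
  rw [Algebra.adjoin_eq_span, Submodule.span_le]
  intro z hz
  induction hz using Submonoid.closure_induction with
  | mem z hz =>
    rcases hz with rfl | rfl
    · simpa using monomial_mem 1 0
    · simpa using monomial_mem 0 1
  | one => simpa using monomial_mem 0 0
  | mul z w _ _ hz hw => exact mul_le (Submodule.mul_mem_mul hz hw)

end QCommuting

theorem mem_span_image_of_eigenvectors {K V ι : Type*} [Field K] [AddCommGroup V] [Module K V]
    {f : Module.End K V} {w : ι → V} {μ : ι → K} (hw : ∀ i, f (w i) = μ i • w i)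
    {x : V} (hx : x ∈ Submodule.span K (Set.range w)) {ν : K} (hfx : f x = ν • x) :
    x ∈ Submodule.span K (w '' {i | μ i = ν}) := by
  have w_mem (i : ι) : w i ∈ f.eigenspace (μ i) := Module.End.mem_eigenspace_iff.2 (hw i)
  have span_le_eigenspace : Submodule.span K (w '' {i | μ i = ν}) ≤ f.eigenspace ν := by
    rw [Submodule.span_le]
    rintro _ ⟨i, rfl, rfl⟩
    exact w_mem i
  have span_le_iSup : Submodule.span K (w '' {i | μ i = ν}ᶜ) ≤ ⨆ μ ≠ ν, f.eigenspace μ := by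
    rw [Submodule.span_le]
    rintro _ ⟨i, hi, rfl⟩
    exact Submodule.mem_iSup_of_mem (μ i) (Submodule.mem_iSup_of_mem hi (w_mem i))
  rw [← Set.image_univ, ← Set.union_compl_self {i | μ i = ν}, Set.image_union,
    Submodule.span_union] at hx
  obtain ⟨y, hy, z, hz, rfl⟩ := Submodule.mem_sup.1 hx
  have z_mem : z ∈ f.eigenspace ν := by
    simpa using sub_mem (Module.End.mem_eigenspace_iff.2 hfx) (span_le_eigenspace hy)
  have z_eq_zero : z = 0 :=
    Submodule.disjoint_def.1 (f.eigenspaces_iSupIndep ν) z z_mem (span_le_iSup hz)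
  rwa [z_eq_zero, add_zero]

theorem lam_pow_eq_one_iff {n : ℕ} (hn : n ≠ 0) (d : ℕ) : lam n ^ d = 1 ↔ n ∣ d :=
  (Complex.isPrimitiveRoot_exp n hn).pow_eq_one_iff_dvd d

theorem lam_pow_eq_one_of_dvd {n d : ℕ} (h : n ∣ d) : lam n ^ d = 1 := by
  rcases eq_or_ne n 0 with rfl | hn
  · rw [zero_dvd_iff.1 h, pow_zero]
  · exact (lam_pow_eq_one_iff hn d).2 h

namespace SkewAlg

theorem vGen_mul_uGen : vGen * uGen = (-1 : ℂ) • (uGen * vGen) := by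
  have relation : uGen * vGen + vGen * uGen = 0 := by
    simpa only [map_add, map_mul, map_zero] using! RingQuot.mkAlgHom_rel ℂ SkewRel.rel
  exact (eq_neg_of_add_eq_zero_right relation).trans (neg_one_smul ℂ _).symm

theorem adjoin_uGen_vGen : Algebra.adjoin ℂ {uGen, vGen} = ⊤ := by
  have range_ι : Set.range (FreeAlgebra.ι ℂ (X := Fin 2)) =
      {FreeAlgebra.ι ℂ 0, FreeAlgebra.ι ℂ 1} := by
    ext; simp [Fin.exists_fin_two, eq_comm]
  calc Algebra.adjoin ℂ {uGen, vGen}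
      = (Algebra.adjoin ℂ (Set.range (FreeAlgebra.ι ℂ))).map (RingQuot.mkAlgHom ℂ SkewRel) := by
        rw [AlgHom.map_adjoin, range_ι, Set.image_pair, uGen, vGen]
    _ = ⊤ := by
        rw [FreeAlgebra.adjoin_range_ι, Algebra.map_top,
          AlgHom.range_eq_top]
        exact RingQuot.mkAlgHom_surjective ℂ SkewRel

/-- The monomial `u^a v^b`; these span `A`. -/
def monomial (a b : ℕ) : SkewAlg := uGen ^ a * vGen ^ b

theorem monomial_mul_monomial (a b c d : ℕ) :
    monomial a b * monomial c d = (-1 : ℂ) ^ (b * c) • monomial (a + c) (b + d) :=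
  monomial_mul_monomial_of_qCommute vGen_mul_uGen a b c d

theorem mem_span_range_monomial (x : SkewAlg) :
    x ∈ Submodule.span ℂ (Set.range fun p : ℕ × ℕ => monomial p.1 p.2) :=
  adjoin_pair_le_span_monomials_of_qCommute vGen_mul_uGen (by simp [adjoin_uGen_vGen])

/-- The automorphism `g` of `A` with `g u = v` and `g v = λ u`, as an algebra endomorphism. -/
def gHom (n : ℕ) : SkewAlg →ₐ[ℂ] SkewAlg :=
  RingQuot.liftAlgHom ℂ ⟨FreeAlgebra.lift ℂ ![vGen, lam n • uGen], by
    rintro _ _ ⟨⟩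
    simp only [map_add, map_mul, map_zero, FreeAlgebra.lift_ι_apply, Matrix.cons_val_zero,
      Matrix.cons_val_one, mul_smul_comm, smul_mul_assoc, vGen_mul_uGen]
    module⟩

variable {n : ℕ}

@[simp]
theorem gHom_uGen : gHom n uGen = vGen := by
  simp [gHom, uGen]

@[simp]
theorem gHom_vGen : gHom n vGen = lam n • uGen := by
  simp [gHom, vGen]

theorem eq_gHom {f : SkewAlg →ₐ[ℂ] SkewAlg} (hu : f uGen = vGen) (hv : f vGen = lam n • uGen) :
    f = gHom n :=
  AlgHom.ext_of_adjoin_eq_top adjoin_uGen_vGen (by rintro _ (rfl | rfl) <;> simp [hu, hv])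

theorem gHom_monomial (a b : ℕ) :
    gHom n (monomial a b) = ((-1 : ℂ) ^ (a * b) * lam n ^ b) • monomial b a := by
  rw [monomial, map_mul, map_pow, map_pow, gHom_uGen, gHom_vGen, smul_pow, mul_smul_comm,
    pow_mul_pow_of_qCommute vGen_mul_uGen, smul_smul, mul_comm, monomial]

theorem gHom_gHom_monomial (a b : ℕ) :
    gHom n (gHom n (monomial a b)) = lam n ^ (a + b) • monomial a b := by
  rw [gHom_monomial, map_smul, gHom_monomial, smul_smul, mul_comm b a]
  congr 1
  calc (-1 : ℂ) ^ (a * b) * lam n ^ b * ((-1) ^ (a * b) * lam n ^ a)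
      = (-1) ^ (a * b) * (-1) ^ (a * b) * lam n ^ (a + b) := by ring
    _ = lam n ^ (a + b) := by rw [pow_mul_pow_eq_one _ (by norm_num), one_mul]

/-- The transfer `x ↦ x + g x`; it is the trace map to `A^G` on the elements fixed by `g²`. -/
def transfer (n : ℕ) : SkewAlg →ₗ[ℂ] SkewAlg := LinearMap.id + (gHom n).toLinearMap

theorem transfer_apply (x : SkewAlg) : transfer n x = x + gHom n x := rfl

theorem transfer_mul_of_fixed (x : SkewAlg) {y : SkewAlg} (hy : gHom n y = y) :
    transfer n (x * y) = transfer n x * y := by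
  rw [transfer_apply, transfer_apply, map_mul, hy, add_mul]

theorem orbitSum_eq_transfer (a b : ℕ) : orbitSum n a b = transfer n (monomial a b) := by
  rw [transfer_apply, gHom_monomial, orbitSum, monomial, monomial]

theorem gHom_orbitSum {a b : ℕ} (h : n ∣ a + b) : gHom n (orbitSum n a b) = orbitSum n a b := by
  rw [orbitSum_eq_transfer, transfer_apply, map_add, gHom_gHom_monomial,
    lam_pow_eq_one_of_dvd h, one_smul, add_comm]

theorem orbitSum_eq_smul_swap {a b : ℕ} (h : n ∣ a + b) :
    orbitSum n a b = ((-1 : ℂ) ^ (a * b) * lam n ^ b) • orbitSum n b a := by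
  calc orbitSum n a b = transfer n (gHom n (monomial a b)) := by
        rw [orbitSum_eq_transfer, transfer_apply, transfer_apply, gHom_gHom_monomial,
          lam_pow_eq_one_of_dvd h, one_smul, add_comm]
    _ = ((-1 : ℂ) ^ (a * b) * lam n ^ b) • orbitSum n b a := by
        rw [gHom_monomial, map_smul, orbitSum_eq_transfer]

theorem mem_span_orbitSum_of_fixed (hn : n ≠ 0) {x : SkewAlg} (hx : gHom n x = x) :
    x ∈ Submodule.span ℂ ((fun p : ℕ × ℕ => orbitSum n p.1 p.2) '' {p | n ∣ p.1 + p.2}) := by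
  have x_mem : x ∈ Submodule.span ℂ
      ((fun p : ℕ × ℕ => monomial p.1 p.2) '' {p | lam n ^ (p.1 + p.2) = 1}) :=
    mem_span_image_of_eigenvectors (f := (gHom n).toLinearMap ∘ₗ (gHom n).toLinearMap)
      (fun p => gHom_gHom_monomial p.1 p.2) (mem_span_range_monomial x) (by simp [hx])
  have transfer_mem := Submodule.mem_map_of_mem (f := transfer n) x_mem
  simp only [Submodule.map_span, Set.image_image, ← orbitSum_eq_transfer,
    lam_pow_eq_one_iff hn] at transfer_mem
  rwa [transfer_apply, hx, ← two_smul ℂ, Submodule.smul_mem_iff _ two_ne_zero] at transfer_mem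

theorem orbitSum_mul_orbitSum (a b : ℕ) {c d : ℕ} (h : n ∣ c + d) :
    orbitSum n a b * orbitSum n c d =
      (-1 : ℂ) ^ (b * c) • orbitSum n (a + c) (b + d) +
      ((-1 : ℂ) ^ (c * d + b * d) * lam n ^ d) • orbitSum n (a + d) (b + c) := by
  have monomial_mul_orbitSum : monomial a b * orbitSum n c d =
      (-1 : ℂ) ^ (b * c) • monomial (a + c) (b + d) +
      ((-1 : ℂ) ^ (c * d + b * d) * lam n ^ d) • monomial (a + d) (b + c) := by
    rw [orbitSum_eq_transfer, transfer_apply, gHom_monomial, mul_add, mul_smul_comm,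
      monomial_mul_monomial, monomial_mul_monomial, smul_smul, pow_add (-1 : ℂ), mul_right_comm]
  rw [orbitSum_eq_transfer a b, ← transfer_mul_of_fixed _ (gHom_orbitSum h),
    monomial_mul_orbitSum, map_add, map_smul, map_smul, ← orbitSum_eq_transfer,
    ← orbitSum_eq_transfer]

theorem orbitSum_mul_orbitSum_diag (a b : ℕ) {m : ℕ} (hm : n ∣ m) (heven : Even m) :
    orbitSum n a b * orbitSum n m m = (2 : ℂ) • orbitSum n (a + m) (b + m) := by
  rw [orbitSum_mul_orbitSum a b (dvd_add hm hm), lam_pow_eq_one_of_dvd hm,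
    (heven.mul_left b).neg_one_pow, ((heven.mul_left m).add (heven.mul_left b)).neg_one_pow,
    mul_one, one_smul, two_smul]

theorem orbitSum_mul_orbitSum_zero (a b : ℕ) :
    orbitSum n a b * orbitSum n n 0 =
      (-1 : ℂ) ^ (b * n) • orbitSum n (a + n) b + orbitSum n a (b + n) := by
  simp [orbitSum_mul_orbitSum a b (c := n) (d := 0)]

theorem orbitSum_zero_mul_orbitSum {a b : ℕ} (h : n ∣ a + b) :
    orbitSum n n 0 * orbitSum n a b =
      orbitSum n (a + n) b + (-1 : ℂ) ^ (a * n) • orbitSum n a (b + n) := by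
  have swap : orbitSum n a (b + n) =
      ((-1 : ℂ) ^ (a * (b + n)) * lam n ^ b) • orbitSum n (b + n) a := by
    rw [orbitSum_eq_smul_swap (by rw [← add_assoc]; exact dvd_add h dvd_rfl), pow_add (lam n),
      lam_pow_eq_one_of_dvd dvd_rfl, mul_one]
  have sign : (-1 : ℂ) ^ (a * n) * ((-1) ^ (a * (b + n)) * lam n ^ b) =
      (-1) ^ (a * b) * lam n ^ b := by
    calc _ = (-1 : ℂ) ^ (a * n) * (-1) ^ (a * n) * ((-1) ^ (a * b) * lam n ^ b) := by ring
      _ = (-1) ^ (a * b) * lam n ^ b := by rw [pow_mul_pow_eq_one _ (by norm_num), one_mul]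
  rw [orbitSum_mul_orbitSum n 0 h, swap, smul_smul, sign, add_comm n a, add_comm n b]
  simp

theorem two_smul_orbitSum_of_odd (hn : Odd n) {a b : ℕ} (h : n ∣ a + b) (hab : Odd (a + b)) :
    (2 : ℂ) • orbitSum n (a + n) b =
      (-1 : ℂ) ^ b • (orbitSum n a b * orbitSum n n 0) + orbitSum n n 0 * orbitSum n a b := by
  have neg_one_pow_mul (k : ℕ) : (-1 : ℂ) ^ (k * n) = (-1) ^ k := by
    rw [mul_comm, pow_mul, hn.neg_one_pow]
  rw [orbitSum_mul_orbitSum_zero, orbitSum_zero_mul_orbitSum h, neg_one_pow_mul, neg_one_pow_mul]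
  rcases Nat.even_or_odd b with hb | hb
  · have ha : Odd a := (Nat.odd_add.1 hab).2 hb
    rw [ha.neg_one_pow, hb.neg_one_pow]
    module
  · have ha : Even a := (Nat.odd_add'.1 hab).1 hb
    rw [ha.neg_one_pow, hb.neg_one_pow]
    module

/-- The subalgebra `B` contains every orbit sum `O(a,b)` of degree `a + b = d`. -/
def ContainsDegree (n : ℕ) (B : Subalgebra ℂ SkewAlg) (d : ℕ) : Prop :=
  ∀ a b : ℕ, a + b = d → orbitSum n a b ∈ B

variable {B : Subalgebra ℂ SkewAlg} {d : ℕ}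

theorem orbitSum_mem_swap {a b : ℕ} (h : n ∣ a + b) (hmem : orbitSum n b a ∈ B) :
    orbitSum n a b ∈ B := by
  rw [orbitSum_eq_smul_swap h]
  exact B.smul_mem hmem _

theorem containsDegree_zero : ContainsDegree n B 0 := by
  intro a b hab
  obtain ⟨rfl, rfl⟩ := Nat.add_eq_zero_iff.1 hab
  simpa [orbitSum] using B.add_mem B.one_mem B.one_mem

theorem orbitSum_add_left_mem {a b : ℕ} (hn : orbitSum n n 0 ∈ B) (hab : orbitSum n a b ∈ B)
    (hright : orbitSum n a (b + n) ∈ B) : orbitSum n (a + n) b ∈ B := by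
  have sum_mem := B.mul_mem hab hn
  rw [orbitSum_mul_orbitSum_zero] at sum_mem
  have smul_mem := ((Subalgebra.toSubmodule B).add_mem_iff_left hright).1 sum_mem
  exact ((Subalgebra.toSubmodule B).smul_mem_iff (pow_ne_zero _ (by norm_num))).1 smul_mem

theorem orbitSum_add_diag_mem {a b m : ℕ} (hm : n ∣ m) (heven : Even m)
    (hmm : orbitSum n m m ∈ B) (hab : orbitSum n a b ∈ B) : orbitSum n (a + m) (b + m) ∈ B := by
  have smul_mem := B.mul_mem hab hmm
  rw [orbitSum_mul_orbitSum_diag a b hm heven] at smul_mem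
  exact ((Subalgebra.toSubmodule B).smul_mem_iff two_ne_zero).1 smul_mem

theorem containsDegree_of_diag_mem (hn : n ≠ 0) {m d₁ d₂ : ℕ} (hm : n ∣ m) (heven : Even m)
    (hn0 : orbitSum n n 0 ∈ B) (hmm : orbitSum n m m ∈ B) (hd : n ∣ d) (hle : n + 2 * m ≤ d)
    (hd₁ : d₁ + 2 * m = d) (h₁ : ContainsDegree n B d₁)
    (hd₂ : d₂ + n = d) (h₂ : ContainsDegree n B d₂) : ContainsDegree n B d := by
  have mem_of_le (j : ℕ) : ∀ a b, m ≤ a → m ≤ b + j * n → a + b = d → orbitSum n a b ∈ B := by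
    induction j with
    | zero =>
      intro a b ha hb hab
      obtain ⟨a, rfl⟩ := Nat.exists_eq_add_of_le' ha
      obtain ⟨b, rfl⟩ := Nat.exists_eq_add_of_le' (by simpa using hb : m ≤ b)
      exact orbitSum_add_diag_mem hm heven hmm (h₁ a b (by omega))
    | succ j ih =>
      intro a b ha hb hab
      rcases le_or_gt m b with hmb | hmb
      · exact ih a b ha (by omega) hab
      · obtain ⟨a, rfl⟩ := Nat.exists_eq_add_of_le' (by omega : n ≤ a)
        exact orbitSum_add_left_mem hn0 (h₂ a b (by omega))
          (ih a (b + n) (by omega) (by linarith) (by omega))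
  have le_mul : m ≤ m * n := Nat.le_mul_of_pos_right m (Nat.pos_of_ne_zero hn)
  intro a b hab
  rcases le_or_gt m a with ha | ha
  · exact mem_of_le m a b ha (by omega) hab
  · exact orbitSum_mem_swap (hab ▸ hd) (mem_of_le m b a (by omega) (by omega) (by omega))

theorem containsDegree_add_of_odd (hn : Odd n) (hn0 : orbitSum n n 0 ∈ B) (hd : n ∣ d)
    (hodd : Odd d) (hBd : ContainsDegree n B d) : ContainsDegree n B (d + n) := by
  have add_left_mem (a b : ℕ) (hab : a + b = d) : orbitSum n (a + n) b ∈ B := by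
    have two_smul_mem : (2 : ℂ) • orbitSum n (a + n) b ∈ B := by
      rw [two_smul_orbitSum_of_odd hn (hab ▸ hd) (hab ▸ hodd)]
      exact B.add_mem (B.smul_mem (B.mul_mem (hBd a b hab) hn0) _) (B.mul_mem hn0 (hBd a b hab))
    exact ((Subalgebra.toSubmodule B).smul_mem_iff two_ne_zero).1 two_smul_mem
  have le_d : n ≤ d := Nat.le_of_dvd hodd.pos hd
  intro a b hab
  rcases le_or_gt n a with ha | ha
  · obtain ⟨a, rfl⟩ := Nat.exists_eq_add_of_le' ha
    exact add_left_mem a b (by omega)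
  · obtain ⟨b, rfl⟩ := Nat.exists_eq_add_of_le' (by omega : n ≤ b)
    exact orbitSum_mem_swap (hab ▸ dvd_add hd dvd_rfl) (add_left_mem b a (by omega))

theorem containsDegree_four_mul (hn : n ≠ 0) (h1 : ContainsDegree n B n)
    (h2 : ContainsDegree n B (2 * n)) (h3 : ContainsDegree n B (3 * n)) :
    ContainsDegree n B (4 * n) := by
  have hn0 : orbitSum n n 0 ∈ B := h1 n 0 rfl
  rcases Nat.even_or_odd n with heven | hodd
  · have hnn : orbitSum n n n ∈ B := h2 n n (by ring)
    exact containsDegree_of_diag_mem hn dvd_rfl heven hn0 hnn (dvd_mul_left n 4) (by omega)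
      (by ring) h2 (by ring) h3
  · rw [show 4 * n = 3 * n + n by ring]
    exact containsDegree_add_of_odd hodd hn0 (dvd_mul_left n 3)
      (Nat.odd_mul.2 ⟨by decide, hodd⟩) h3

theorem containsDegree_mul (hn : n ≠ 0) (h1 : ContainsDegree n B n)
    (h2 : ContainsDegree n B (2 * n)) (h3 : ContainsDegree n B (3 * n)) (k : ℕ) :
    ContainsDegree n B (k * n) := by
  have h4 := containsDegree_four_mul hn h1 h2 h3
  induction k using Nat.strong_induction_on with
  | _ k ih =>
    match k, ih with
    | 0, _ => simpa using containsDegree_zero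
    | 1, _ => simpa using h1
    | 2, _ => exact h2
    | 3, _ => exact h3
    | 4, _ => exact h4
    | k + 5, ih =>
      have diag_mem : orbitSum n (2 * n) (2 * n) ∈ B := h4 _ _ (by ring)
      exact containsDegree_of_diag_mem hn (dvd_mul_left n 2) (even_two_mul n) (h1 n 0 rfl) diag_mem
        (dvd_mul_left n (k + 5)) (by linarith [Nat.zero_le (k * n)])
        (by ring) (ih (k + 1) (by omega)) (by ring) (ih (k + 4) (by omega))

theorem containsDegree_of_forall_le (hd : n ∣ d)
    (h : ∀ i ≤ d / 2, orbitSum n (d - i) i ∈ B) : ContainsDegree n B d := by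
  have mem_of_le (a b : ℕ) (hba : b ≤ a) (hab : a + b = d) : orbitSum n a b ∈ B := by
    simpa only [← hab, Nat.add_sub_cancel] using h b (by omega)
  intro a b hab
  rcases le_total b a with hba | hba
  · exact mem_of_le a b hba hab
  · exact orbitSum_mem_swap (hab ▸ hd) (mem_of_le b a hba (by omega))

theorem equalizer_gHom_le (hn : n ≠ 0) (h1 : ContainsDegree n B n)
    (h2 : ContainsDegree n B (2 * n)) (h3 : ContainsDegree n B (3 * n)) :
    AlgHom.equalizer (gHom n) (AlgHom.id ℂ SkewAlg) ≤ B := by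
  intro x hx
  refine (Submodule.span_le.2 ?_ : _ ≤ Subalgebra.toSubmodule B) (mem_span_orbitSum_of_fixed hn hx)
  rintro _ ⟨⟨a, b⟩, ⟨k, hk⟩, rfl⟩
  exact containsDegree_mul hn h1 h2 h3 k a b (by rw [hk, mul_comm])

end SkewAlg

open SkewAlg in
theorem fixed_eq_adjoin_of_odd_general (n : ℕ) (hn : n ≠ 0)
    (g : SkewAlg ≃ₐ[ℂ] SkewAlg) (hgu : g uGen = vGen) (hgv : g vGen = lam n • uGen) :
    {a : SkewAlg | g a = a} =
      ↑(Algebra.adjoin ℂ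
        ({x : SkewAlg | ∃ i : ℕ, i ≤ n / 2 ∧ x = orbitSum n (n - i) i} ∪
         {x : SkewAlg | ∃ i : ℕ, i ≤ n ∧ x = orbitSum n (2 * n - i) i} ∪
         {x : SkewAlg | ∃ i : ℕ, i ≤ 3 * n / 2 ∧ x = orbitSum n (3 * n - i) i})) := by
  have g_eq : (g : SkewAlg →ₐ[ℂ] SkewAlg) = gHom n := eq_gHom hgu hgv
  change ((AlgHom.equalizer (g : SkewAlg →ₐ[ℂ] SkewAlg) (AlgHom.id ℂ SkewAlg) :
    Subalgebra ℂ SkewAlg) : Set SkewAlg) = _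
  rw [g_eq, SetLike.coe_set_eq]
  apply le_antisymm
  · apply equalizer_gHom_le hn
    · exact containsDegree_of_forall_le dvd_rfl fun i hi =>
        Algebra.subset_adjoin (.inl (.inl ⟨i, hi, rfl⟩))
    · exact containsDegree_of_forall_le (dvd_mul_left n 2) fun i hi =>
        Algebra.subset_adjoin (.inl (.inr ⟨i, by omega, rfl⟩))
    · exact containsDegree_of_forall_le (dvd_mul_left n 3) fun i hi =>
        Algebra.subset_adjoin (.inr ⟨i, hi, rfl⟩)
  · apply Algebra.adjoin_le
    rintro _ ((⟨i, hi, rfl⟩ | ⟨i, hi, rfl⟩) | ⟨i, hi, rfl⟩)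
    · exact gHom_orbitSum ⟨1, by omega⟩
    · exact gHom_orbitSum ⟨2, by omega⟩
    · exact gHom_orbitSum ⟨3, by omega⟩

/-- If `n` is odd then the fixed subring `A^G` is generated as a `ℂ`-algebra by
the orbit sums of degrees `n`, `2n` and `3n`. -/
theorem fixed_eq_adjoin_of_odd (n : ℕ) (hodd : Odd n)
    (g : SkewAlg ≃ₐ[ℂ] SkewAlg) (hgu : g uGen = vGen) (hgv : g vGen = lam n • uGen) :
    {a : SkewAlg | g a = a} =
      ↑(Algebra.adjoin ℂ
        ({x : SkewAlg | ∃ i : ℕ, i ≤ (n - 1) / 2 ∧ x = orbitSum n (n - i) i} ∪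
         {x : SkewAlg | ∃ i : ℕ, i ≤ n ∧ x = orbitSum n (2 * n - i) i} ∪
         {x : SkewAlg | ∃ i : ℕ, i ≤ (3 * n - 1) / 2 ∧ x = orbitSum n (3 * n - i) i})) := by
  rw [show (n - 1) / 2 = n / 2 by grind, show (3 * n - 1) / 2 = 3 * n / 2 by grind]
  exact fixed_eq_adjoin_of_odd_general n hodd.pos.ne' g hgu hgv
end
end
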